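/- Let N ≥ 1 and let G be a subgroup of GL(N,ℂ). The following are equivalent: (1) there exist p, q ∈ ℕ with p + q = N and an invertible c ∈ M(N,ℂ) such that c g c⁻¹ ∈ U(p,q) for every g ∈ G, where U(p,q) := {x ∈ M(N,ℂ) : xᴴ I_{p,q} x = I_{p,q}}; (2) there exists an invertible matrix h ∈ M(N,ℂ) such that gᴴ h g = h for every g ∈ G. Moreover, in proving (2) ⇒ (1) one may take h Hermitian: if some invertible h satisfies gᴴ h g = h for all g ∈ G, then some invertible Hermitian h' satisfies gᴴ h' g = h' for all g ∈ G. -/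

import Mathlib

open Matrix

/-- `I_{p,q}`: the diagonal matrix `diag(I_p, −I_q)` of size `N = p + q`. -/
def Ipq (N p : ℕ) : Matrix (Fin N) (Fin N) ℂ :=
  Matrix.diagonal fun k => if (k : ℕ) < p then 1 else -1

/-!
If `a` is invertible then so is `z • a + star (z • a)` for a suitable `z : ℂ`: up to units it is
`a⁻¹ * star a - s ^ 2` with `s` on the unit circle, and the spectrum of a matrix is finite. This
form is Hermitian and is preserved by everything that preserves `a`. A Hermitian invertible matrix
is unitarily diagonalizable with nonzero real eigenvalues; rescaling these to `±1` and sorting them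
turns it into `cᴴ * Ipq N p * c`, and conjugation by `c` identifies its isometries with `U(p, q)`.
-/

/-- `*`-congruence of `a` and `b`: in a matrix ring, they are Gram matrices of the same sesquilinear
form in two bases, related by the change of basis `c`. Bringing a Hermitian
form to a diagonal normal form means finding a diagonal matrix `*`-congruent to it. -/
def StarCongruent {R : Type*} [Monoid R] [Star R] (a b : R) : Prop :=
  ∃ c : Rˣ, star (c : R) * a * c = b

namespace StarCongruent

section Monoid

variable {R : Type*} [Monoid R] [StarMul R] {a b c : R}

theorem trans : StarCongruent a b → StarCongruent b c → StarCongruent a c := by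
  rintro ⟨u, rfl⟩ ⟨v, rfl⟩
  exact ⟨u * v, by simp only [Units.val_mul, star_mul, mul_assoc]⟩

theorem isUnit_iff : StarCongruent a b → (IsUnit a ↔ IsUnit b) := by
  rintro ⟨u, rfl⟩
  rw [Units.isUnit_mul_units, ← Units.coe_star, Units.isUnit_units_mul]

end Monoid

section Matrix

variable {n R : Type*} [Fintype n] [DecidableEq n]

protected theorem diagonal [Semiring R] [StarRing R] {d e : n → R}
    (h : ∀ i, StarCongruent (d i) (e i)) : StarCongruent (diagonal d) (diagonal e) := by
  choose u hu using h
  refine ⟨Units.map (diagonalRingHom n R) (MulEquiv.piUnits.symm u), ?_⟩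
  simp [star_eq_conjTranspose, diagonal_conjTranspose, hu]

theorem submatrix_perm [Semiring R] [StarRing R] (A : Matrix n n R) (σ : Equiv.Perm n) :
    StarCongruent (A.submatrix σ σ) A := by
  refine ⟨Units.map permMatrixHom (toUnits σ⁻¹), ?_⟩
  simp [star_eq_conjTranspose, PEquiv.toMatrix_toPEquiv_mul, PEquiv.mul_toMatrix_toPEquiv]

end Matrix

end StarCongruent

theorem star_units_conj_mul_mul_units_conj_eq_iff {R : Type*} [Monoid R] [StarMul R] (c : Rˣ)
    (j g : R) :
    star (c * g * ↑c⁻¹) * j * (c * g * ↑c⁻¹) = j ↔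
      star g * (star (c : R) * j * c) * g = star (c : R) * j * c := by
  have h : star g * (star (c : R) * j * c) * g =
      star (c : R) * (star (c * g * ↑c⁻¹) * j * (c * g * ↑c⁻¹)) * c := by
    simp only [star_mul, ← Units.coe_star, star_inv, mul_assoc, Units.inv_mul,
      Units.mul_inv_cancel_left, mul_one]
  rw [h, Units.mul_left_inj, ← Units.coe_star, Units.mul_right_inj]

theorem exists_norm_eq_one_sq_notMem {S : Set ℂ} (hS : S.Finite) :
    ∃ s : ℂ, ‖s‖ = 1 ∧ s ^ 2 ∉ S := by
  have hcircle : (Metric.sphere (0 : ℂ) 1).Infinite :=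
    (isPreconnected_sphere (by simp) 0 1).infinite_of_nontrivial
      ⟨1, by simp, -1, by simp, by norm_num⟩
  obtain ⟨w, hw, hwS⟩ := hcircle.exists_notMem_finite hS
  obtain ⟨s, rfl⟩ := IsAlgClosed.exists_pow_nat_eq w two_pos
  exact ⟨s, by simpa [pow_eq_one_iff_of_nonneg] using hw, hwS⟩

section StarAlgebra

open ComplexStarModule

variable {A : Type*} [Ring A] [StarRing A] [Algebra ℂ A] [StarModule ℂ A]

theorem star_mul_realPart_mul (g a : A) :
    star g * (ℜ a : A) * g = (ℜ (star g * a * g) : A) := by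
  simp only [realPart_apply_coe, star_mul, star_star, mul_smul_comm, smul_mul_assoc, mul_add,
    add_mul, mul_assoc]

theorem isUnit_realPart_I_mul_smul (a : Aˣ) {s : ℂ} (hs : ‖s‖ = 1)
    (hsa : s ^ 2 ∉ spectrum ℂ (↑a⁻¹ * star (a : A))) :
    IsUnit (ℜ ((Complex.I * s) • (a : A)) : A) := by
  have hconj : star s * s ^ 2 = s := by
    rw [pow_two, ← mul_assoc, RCLike.star_def, RCLike.conj_mul, hs]
    simp
  have hfactor : (ℜ ((Complex.I * s) • (a : A)) : A) =
      (2⁻¹ * Complex.I * star s) • (a * (algebraMap ℂ A (s ^ 2) - ↑a⁻¹ * star (a : A))) := by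
    rw [realPart_apply_coe, mul_sub, Units.mul_inv_cancel_left, ← Algebra.commutes,
      ← Algebra.smul_def, smul_sub, smul_smul, mul_assoc, hconj]
    simp [smul_smul, ← Complex.coe_smul, mul_assoc, sub_eq_add_neg]
  have hs0 : s ≠ 0 := norm_ne_zero_iff.mp (hs ▸ one_ne_zero)
  rw [hfactor]
  exact (a.isUnit.mul (spectrum.notMem_iff.mp hsa)).smul
    (Units.mk0 (2⁻¹ * Complex.I * star s) (by simp [hs0]))

theorem exists_isSelfAdjoint_isUnit_forall_preserved (a : Aˣ)
    (ha : (spectrum ℂ (↑a⁻¹ * star (a : A))).Finite) :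
    ∃ b : A, IsSelfAdjoint b ∧ IsUnit b ∧ ∀ g : A, star g * a * g = a → star g * b * g = b := by
  obtain ⟨s, hs, hsa⟩ := exists_norm_eq_one_sq_notMem ha
  refine ⟨_, (ℜ ((Complex.I * s) • (a : A))).2, isUnit_realPart_I_mul_smul a hs hsa, fun g hg => ?_⟩
  rw [star_mul_realPart_mul, mul_smul_comm, smul_mul_assoc, hg]

end StarAlgebra

theorem exists_perm_forall_iff_val_lt {N : ℕ} (P : Fin N → Prop) :
    ∃ p ≤ N, ∃ σ : Equiv.Perm (Fin N), ∀ k, P (σ k) ↔ (k : ℕ) < p := by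
  classical
  have hp : Fintype.card {k // P k} ≤ N := by simpa using Fintype.card_subtype_le P
  have hcard : Fintype.card {k : Fin N // (k : ℕ) < Fintype.card {k // P k}} =
      Fintype.card {k // P k} := by
    rw [Fintype.card_subtype, Fin.card_filter_val_lt, min_eq_right hp]
  let e := Fintype.equivOfCardEq hcard
  exact ⟨_, hp, e.extendSubtype, fun k =>
    ⟨fun hk => by_contra fun hlt => e.extendSubtype_not_mem k hlt hk, e.extendSubtype_mem k⟩⟩

section RCLike

variable {𝕜 : Type*} [RCLike 𝕜]

theorem starCongruent_ite_pos_ofReal {x : ℝ} (hx : x ≠ 0) :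
    StarCongruent (if 0 < x then 1 else -1 : 𝕜) x := by
  have hsq : (√|x| : 𝕜) * √|x| = |x| := by
    rw [← RCLike.ofReal_mul, Real.mul_self_sqrt (abs_nonneg x)]
  refine ⟨Units.mk0 (√|x| : 𝕜) (by simpa using hx), ?_⟩
  split_ifs with hpos
  · simpa [abs_of_pos hpos] using hsq
  · simpa [abs_of_nonpos (not_lt.mp hpos), neg_eq_iff_eq_neg] using hsq

theorem starCongruent_diagonal_eigenvalues {n : Type*} [Fintype n] [DecidableEq n]
    {A : Matrix n n 𝕜} (hA : A.IsHermitian) :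
    StarCongruent (diagonal (RCLike.ofReal ∘ hA.eigenvalues)) A := by
  refine ⟨Unitary.toUnits (star hA.eigenvectorUnitary), ?_⟩
  conv_rhs => rw [hA.spectral_theorem, Unitary.conjStarAlgAut_apply]
  simp

end RCLike

theorem isUnit_Ipq (N p : ℕ) : IsUnit (Ipq N p) := by
  refine isUnit_diagonal.mpr (Pi.isUnit_iff.mpr fun k => ?_)
  split_ifs
  exacts [isUnit_one, isUnit_one.neg]

theorem exists_starCongruent_Ipq {N : ℕ} {A : Matrix (Fin N) (Fin N) ℂ} (hA : A.IsHermitian)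
    (hu : IsUnit A) : ∃ p ≤ N, StarCongruent (Ipq N p) A := by
  have hdiag := starCongruent_diagonal_eigenvalues hA
  have hne (k : Fin N) : hA.eigenvalues k ≠ 0 := by
    have hunits := isUnit_diagonal.mp (hdiag.isUnit_iff.mpr hu)
    simpa using (Pi.isUnit_iff.mp hunits k).ne_zero
  obtain ⟨p, hp, σ, hσ⟩ := exists_perm_forall_iff_val_lt fun k => 0 < hA.eigenvalues k
  have hscale : StarCongruent (Ipq N p) (diagonal (Complex.ofReal ∘ hA.eigenvalues ∘ σ)) :=
    StarCongruent.diagonal fun k => by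
      simpa [hσ] using! starCongruent_ite_pos_ofReal (𝕜 := ℂ) (hne (σ k))
  have hsort := StarCongruent.submatrix_perm (diagonal (Complex.ofReal ∘ hA.eigenvalues)) σ
  rw [submatrix_diagonal_equiv] at hsort
  exact ⟨p, hp, (hscale.trans hsort).trans hdiag⟩

/-- A subgroup `G` of `GL(N,ℂ)` is conjugate into some `U(p,q)` iff it leaves
invariant some nondegenerate sesquilinear form, i.e. `gᴴ h g = h` for an invertible
`h`; moreover such an `h` may then be chosen Hermitian. -/
theorem conjugate_into_Upq_iff (N : ℕ) (hN : 1 ≤ N)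
    (G : Subgroup (GL (Fin N) ℂ)) :
    ((∃ p q, p + q = N ∧ ∃ c : Matrix (Fin N) (Fin N) ℂ, IsUnit c ∧
        ∀ g ∈ G,
          (c * (g : Matrix (Fin N) (Fin N) ℂ) * c⁻¹)ᴴ * Ipq N p *
            (c * (g : Matrix (Fin N) (Fin N) ℂ) * c⁻¹) = Ipq N p) ↔
      (∃ h : Matrix (Fin N) (Fin N) ℂ, IsUnit h ∧
        ∀ g ∈ G,
          (g : Matrix (Fin N) (Fin N) ℂ)ᴴ * h * (g : Matrix (Fin N) (Fin N) ℂ) = h)) ∧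
    ((∃ h : Matrix (Fin N) (Fin N) ℂ, IsUnit h ∧
        ∀ g ∈ G,
          (g : Matrix (Fin N) (Fin N) ℂ)ᴴ * h * (g : Matrix (Fin N) (Fin N) ℂ) = h) →
      ∃ h' : Matrix (Fin N) (Fin N) ℂ, IsUnit h' ∧ h'ᴴ = h' ∧
        ∀ g ∈ G,
          (g : Matrix (Fin N) (Fin N) ℂ)ᴴ * h' * (g : Matrix (Fin N) (Fin N) ℂ) = h') := by
  simp only [← star_eq_conjTranspose]
  refine ⟨⟨?_, ?_⟩, ?_⟩
  · rintro ⟨p, -, -, _, ⟨c, rfl⟩, hG⟩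
    refine ⟨star (c : Matrix (Fin N) (Fin N) ℂ) * Ipq N p * c,
      (StarCongruent.isUnit_iff ⟨c, rfl⟩).mp (isUnit_Ipq N p),
      fun g hg => (star_units_conj_mul_mul_units_conj_eq_iff c _ _).mp ?_⟩
    simpa only [coe_units_inv] using hG g hg
  · rintro ⟨_, ⟨h, rfl⟩, hG⟩
    obtain ⟨h', hherm, hunit, hpres⟩ :=
      exists_isSelfAdjoint_isUnit_forall_preserved h (finite_spectrum _)
    obtain ⟨p, hp, c, rfl⟩ := exists_starCongruent_Ipq hherm hunit
    refine ⟨p, N - p, Nat.add_sub_of_le hp, c, c.isUnit, fun g hg => ?_⟩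
    rw [← coe_units_inv]
    exact (star_units_conj_mul_mul_units_conj_eq_iff c _ _).mpr (hpres g (hG g hg))
  · rintro ⟨_, ⟨h, rfl⟩, hG⟩
    obtain ⟨h', hherm, hunit, hpres⟩ :=
      exists_isSelfAdjoint_isUnit_forall_preserved h (finite_spectrum _)
    exact ⟨h', hunit, hherm, fun g hg => hpres g (hG g hg)⟩
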